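/- Let d ≥ 2 and let Λ ⊆ K̃^d be a well rounded unimodular lattice. Then CovRad_{O^d}(Λ) = q^{-1}; that is, sup_{w ∈ K̃^d} inf_{u ∈ Λ} ‖w − u‖ = q^{-1}. (Function field analogue of Woods' conjecture.) -/

import Mathlib

noncomputable section

open scoped Classical

variable (Fq : Type) [Field Fq] [Fintype Fq]

/-- `K̃ = 𝔽_q((x⁻¹))`, realized as formal Laurent series in `t = x⁻¹`. -/
abbrev Kt := LaurentSeries Fq

/-- The element `x` of `K̃` (the inverse of the Laurent series variable). -/
def Kx : Kt Fq := HahnSeries.single (-1 : ℤ) 1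

/-- Absolute value `|f| = q^{deg f}`, i.e. `q^{-order f}` in terms of `t = x⁻¹`. -/
def Kabs (f : Kt Fq) : ℝ := if f = 0 then 0 else (Fintype.card Fq : ℝ) ^ (-f.order)

/-- The ring embedding of `R = 𝔽_q[x]` into `K̃`. -/
def polyK : Polynomial Fq →+* Kt Fq := (Polynomial.aeval (Kx Fq)).toRingHom

/-- Sup norm on `K̃^d`. -/
def vnorm {d : ℕ} (v : Fin d → Kt Fq) : ℝ := ⨆ i, Kabs Fq (v i)

/-- The lattice `g·R^d`. -/
def lattice {d : ℕ} (g : Matrix (Fin d) (Fin d) (Kt Fq)) : Set (Fin d → Kt Fq) :=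
  {v | ∃ c : Fin d → Polynomial Fq, v = g.mulVec fun j => polyK Fq (c j)}

/-- `i`-th successive minimum of `Λ` with respect to a norm `nrm`: the least `r > 0` such that
`Λ` contains `i` linearly independent vectors of norm at most `r`. -/
def minimaN {d : ℕ} (nrm : (Fin d → Kt Fq) → ℝ) (Λ : Set (Fin d → Kt Fq)) (i : ℕ) : ℝ :=
  sInf {r : ℝ | 0 < r ∧ ∃ v : Fin i → Fin d → Kt Fq,
    (∀ j, v j ∈ Λ) ∧ LinearIndependent (Kt Fq) v ∧ ∀ j, nrm (v j) ≤ r}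

/-- `i`-th successive minimum with respect to the sup norm. -/
def minima {d : ℕ} (Λ : Set (Fin d → Kt Fq)) (i : ℕ) : ℝ := minimaN Fq (vnorm Fq) Λ i

/-- Covering radius of `Λ` with respect to the norm `nrm`. -/
def covRad {d : ℕ} (nrm : (Fin d → Kt Fq) → ℝ) (Λ : Set (Fin d → Kt Fq)) : ℝ :=
  ⨆ w : Fin d → Kt Fq, ⨅ u : Λ, nrm (w - u.1)

/-- Length of the shortest nonzero vector of `Λ`. -/
def ell {d : ℕ} (Λ : Set (Fin d → Kt Fq)) : ℝ :=
  sInf {r : ℝ | ∃ v ∈ Λ, v ≠ 0 ∧ vnorm Fq v = r}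

/-- `Λ` is well rounded: it contains `d` linearly independent vectors of norm `ℓ(Λ)`. -/
def IsWellRounded {d : ℕ} (Λ : Set (Fin d → Kt Fq)) : Prop :=
  ∃ v : Fin d → Fin d → Kt Fq, (∀ j, v j ∈ Λ) ∧ LinearIndependent (Kt Fq) v ∧
    ∀ j, vnorm Fq (v j) = ell Fq Λ

/-- The multiplicative "norm" `N(v) = ∏ |v i|`. -/
def Nprod {d : ℕ} (v : Fin d → Kt Fq) : ℝ := ∏ i, Kabs Fq (v i)

/-- The Minkowski function `μ(Λ) = sup_w inf_{u ∈ Λ} N(w - u)`. -/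
def mink {d : ℕ} (Λ : Set (Fin d → Kt Fq)) : ℝ :=
  ⨆ w : Fin d → Kt Fq, ⨅ u : Λ, Nprod Fq (w - u.1)

/-!
Let `V` have as columns `d` independent shortest vectors of `Λ`. A nonzero combination of them with
coefficients in `𝔽_q` is a nonzero vector of `Λ`, so it is no shorter than `ℓ(Λ)`. Up to scaling,
every nonzero vector of `K̃^d` is a nonzero constant vector plus a shorter remainder, so the
ultrametric inequality shows that `V` multiplies all norms by `ℓ(Λ)`. Rounding the coordinates of a
lattice vector with respect to `V` leaves a lattice vector of norm at most `ℓ(Λ) / q`, that is `0`,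
so `Λ = V R^d`. Hence the covering radius of `Λ` is `ℓ(Λ)` times that of `R^d`, which is `q⁻¹`, and
`ℓ(Λ)^d = |det V| = |det g|`.
-/

section Similitude

variable {K m n : Type*} [NormedField K] [Fintype m] [Fintype n]

/-- The matrix `A` multiplies all sup norms by the factor `r`. -/
def IsSimilitude (A : Matrix m n K) (r : ℝ) : Prop :=
  ∀ z, ‖A.mulVec z‖ = r * ‖z‖

namespace IsSimilitude

variable {A : Matrix m n K} {B : Matrix n n K} {r : ℝ}

theorem norm_apply_le (hA : IsSimilitude A r) (i : m) (j : n) : ‖A i j‖ ≤ r := by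
  have hcol : ‖A.col j‖ = r := by
    rw [← Matrix.mulVec_single_one, hA, Pi.norm_single, norm_one, mul_one]
  exact hcol ▸ norm_le_pi_norm (A.col j) i

variable [DecidableEq n]

theorem det_ne_zero (hB : IsSimilitude B r) (hr : 0 < r) : B.det ≠ 0 := by
  intro hdet
  obtain ⟨z, hz, hBz⟩ := Matrix.exists_mulVec_eq_zero_iff.mpr hdet
  have : 0 < r * ‖z‖ := mul_pos hr (norm_pos_iff.mpr hz)
  rw [← hB, hBz, norm_zero] at this
  exact this.false

theorem mulVec_inv_mulVec (hB : IsSimilitude B r) (hr : 0 < r) (z : n → K) :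
    B.mulVec (B⁻¹.mulVec z) = z := by
  rw [Matrix.mulVec_mulVec, Matrix.mul_nonsing_inv _ (hB.det_ne_zero hr).isUnit, Matrix.one_mulVec]

theorem inv (hB : IsSimilitude B r) (hr : 0 < r) : IsSimilitude B⁻¹ r⁻¹ := fun z => by
  rw [eq_inv_mul_iff_mul_eq₀ hr.ne', ← hB, hB.mulVec_inv_mulVec hr]

end IsSimilitude

variable [IsUltrametricDist K]

theorem norm_mulVec_le_of_forall_norm_le {A : Matrix m n K} {r : ℝ} (hr : 0 ≤ r)
    (hA : ∀ i j, ‖A i j‖ ≤ r) (z : n → K) : ‖A.mulVec z‖ ≤ r * ‖z‖ := by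
  refine (pi_norm_le_iff_of_nonneg (by positivity)).mpr fun i => ?_
  refine IsUltrametricDist.norm_sum_le_of_forall_le_of_nonneg (by positivity) fun j _ => ?_
  rw [norm_mul]
  exact mul_le_mul (hA i j) (norm_le_pi_norm z j) (norm_nonneg _) hr

variable [DecidableEq n]

theorem norm_det_le_of_forall_norm_le {A : Matrix n n K} {r : ℝ} (hr : 0 ≤ r)
    (hA : ∀ i j, ‖A i j‖ ≤ r) : ‖A.det‖ ≤ r ^ Fintype.card n := by
  rw [Matrix.det_apply']
  refine IsUltrametricDist.norm_sum_le_of_forall_le_of_nonneg (by positivity) fun σ _ => ?_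
  have hsign : ‖((Equiv.Perm.sign σ : ℤ) : K)‖ = 1 := by
    rcases Int.units_eq_one_or (Equiv.Perm.sign σ) with h | h <;> simp [h]
  rw [norm_mul, hsign, one_mul, norm_prod]
  exact (Finset.prod_le_prod (fun i _ => norm_nonneg _) fun i _ => hA (σ i) i).trans_eq
    (Finset.prod_const r)

theorem IsSimilitude.norm_det {A : Matrix n n K} {r : ℝ} (hA : IsSimilitude A r) (hr : 0 < r) :
    ‖A.det‖ = r ^ Fintype.card n := by
  refine (norm_det_le_of_forall_norm_le hr.le hA.norm_apply_le).antisymm ?_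
  have hinv : ‖A.det‖⁻¹ ≤ (r ^ Fintype.card n)⁻¹ := by
    rw [← norm_inv, ← inv_pow, ← Ring.inverse_eq_inv', ← Matrix.det_nonsing_inv]
    exact norm_det_le_of_forall_norm_le (by positivity) (hA.inv hr).norm_apply_le
  exact (inv_le_inv₀ (norm_pos_iff.mpr (hA.det_ne_zero hr)) (by positivity)).mp hinv

end Similitude

section Algebra

variable {F : Type} [Field F]

theorem polyK_monomial (k : ℕ) (a : F) :
    polyK F (Polynomial.monomial k a) = HahnSeries.single (-(k : ℤ)) a := by
  have hC : algebraMap F (Kt F) a = HahnSeries.single 0 a := by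
    simp [HahnSeries.algebraMap_apply', HahnSeries.C_apply]
  simp [polyK, Kx, hC, HahnSeries.single_mul_single]

theorem polyK_C (a : F) : polyK F (Polynomial.C a) = HahnSeries.C a := by
  rw [← Polynomial.monomial_zero_left, polyK_monomial]
  rfl

theorem coeff_polyK (p : Polynomial F) (n : ℤ) :
    (polyK F p).coeff n = if 0 < n then 0 else p.coeff (-n).toNat := by
  induction p using Polynomial.induction_on' with
  | add p p' hp hp' =>
    rw [map_add, HahnSeries.coeff_add, hp, hp', Polynomial.coeff_add]
    split_ifs <;> simp only [add_zero]
  | monomial k a =>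
    rw [polyK_monomial, HahnSeries.coeff_single, Polynomial.coeff_monomial]
    split_ifs <;> first | rfl | omega

variable {d : ℕ} {g V : Matrix (Fin d) (Fin d) (Kt F)}

theorem mulVec_polyK_mem_lattice (g : Matrix (Fin d) (Fin d) (Kt F)) (c : Fin d → Polynomial F) :
    (g.mulVec fun j => polyK F (c j)) ∈ lattice F g :=
  ⟨c, rfl⟩

theorem sub_mem_lattice {u v : Fin d → Kt F} (hu : u ∈ lattice F g) (hv : v ∈ lattice F g) :
    u - v ∈ lattice F g := by
  obtain ⟨a, rfl⟩ := hu
  obtain ⟨b, rfl⟩ := hv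
  refine ⟨a - b, ?_⟩
  rw [← Matrix.mulVec_sub]
  exact congrArg g.mulVec (funext fun j => (map_sub (polyK F) (a j) (b j)).symm)

theorem col_mem_lattice (g : Matrix (Fin d) (Fin d) (Kt F)) (j : Fin d) :
    g.col j ∈ lattice F g := by
  refine ⟨Pi.single j 1, ?_⟩
  rw [← Matrix.mulVec_single_one]
  exact congrArg g.mulVec (funext fun i => by simp [Pi.single_apply, apply_ite (polyK F)])

theorem exists_eq_mul_map_polyK (hV : ∀ j, V.col j ∈ lattice F g) :
    ∃ P : Matrix (Fin d) (Fin d) (Polynomial F), V = g * P.map (polyK F) := by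
  choose c hc using hV
  exact ⟨Matrix.of fun i j => c j i, Matrix.ext fun i j => congrFun (hc j) i⟩

theorem lattice_subset_of_col_mem (hV : ∀ j, V.col j ∈ lattice F g) :
    lattice F V ⊆ lattice F g := by
  obtain ⟨P, rfl⟩ := exists_eq_mul_map_polyK hV
  rintro _ ⟨c, rfl⟩
  refine ⟨P.mulVec c, ?_⟩
  rw [← Matrix.mulVec_mulVec]
  exact congrArg g.mulVec (funext fun i => ((polyK F).map_mulVec P c i).symm)

theorem det_ne_zero_of_lattice_subset (hVg : lattice F V ⊆ lattice F g) (hV : V.det ≠ 0) :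
    g.det ≠ 0 := by
  obtain ⟨P, rfl⟩ := exists_eq_mul_map_polyK fun j => hVg (col_mem_lattice V j)
  exact left_ne_zero_of_mul (Matrix.det_mul g _ ▸ hV)

theorem covRad_eq_of_forall_exists_le_of_exists_forall_le {nrm : (Fin d → Kt F) → ℝ}
    (hnrm : ∀ v, 0 ≤ nrm v) {Λ : Set (Fin d → Kt F)} {ρ : ℝ}
    (hle : ∀ w, ∃ u ∈ Λ, nrm (w - u) ≤ ρ) (hge : ∃ w, ∀ u ∈ Λ, ρ ≤ nrm (w - u)) :
    covRad F nrm Λ = ρ := by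
  have hinf (w) : ⨅ u : Λ, nrm (w - u) ≤ ρ := by
    obtain ⟨u, hu, hwu⟩ := hle w
    exact ciInf_le_of_le ⟨0, Set.forall_mem_range.mpr fun u => hnrm (w - u)⟩ ⟨u, hu⟩ hwu
  obtain ⟨w, hw⟩ := hge
  obtain ⟨u, hu, -⟩ := hle w
  have : Nonempty Λ := ⟨⟨u, hu⟩⟩
  exact (ciSup_le hinf).antisymm <|
    le_ciSup_of_le ⟨ρ, Set.forall_mem_range.mpr hinf⟩ w (le_ciInf fun u => hw u u.2)

end Algebra

section LaurentSeries

variable {Fq}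

local notation "q" => (Fintype.card Fq : ℝ)

theorem one_lt_card : 1 < q := by
  exact_mod_cast Fintype.one_lt_card

theorem card_pos : 0 < q :=
  zero_lt_one.trans one_lt_card

theorem Kabs_of_ne_zero {f : Kt Fq} (hf : f ≠ 0) : Kabs Fq f = q ^ (-f.order) :=
  if_neg hf

theorem Kabs_mul (f g : Kt Fq) : Kabs Fq (f * g) = Kabs Fq f * Kabs Fq g := by
  by_cases hf : f = 0
  · simp [hf, Kabs]
  by_cases hg : g = 0
  · simp [hg, Kabs]
  rw [Kabs_of_ne_zero hf, Kabs_of_ne_zero hg, Kabs_of_ne_zero (mul_ne_zero hf hg),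
    HahnSeries.order_mul hf hg, ← zpow_add₀ card_pos.ne', neg_add]

theorem Kabs_le_zpow_neg_iff {f : Kt Fq} {n : ℤ} :
    Kabs Fq f ≤ q ^ (-n) ↔ ∀ k < n, f.coeff k = 0 := by
  by_cases hf : f = 0
  · simp [hf, Kabs, (zpow_pos card_pos _).le]
  · rw [Kabs_of_ne_zero hf, zpow_le_zpow_iff_right₀ one_lt_card, neg_le_neg_iff,
      HahnSeries.le_order_iff_forall hf]

theorem Kabs_nonneg (f : Kt Fq) : 0 ≤ Kabs Fq f := by
  unfold Kabs
  split_ifs <;> positivity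

theorem Kabs_eq_zero {f : Kt Fq} : Kabs Fq f = 0 ↔ f = 0 := by
  refine ⟨fun h => by_contra fun hf => ?_, fun h => if_pos h⟩
  exact (zpow_pos card_pos _).ne' (Kabs_of_ne_zero hf ▸ h)

theorem isNonarchimedean_Kabs : IsNonarchimedean (Kabs Fq) := by
  intro f g
  wlog hfg : Kabs Fq f ≤ Kabs Fq g generalizing f g
  · rw [add_comm, max_comm]
    exact this g f (le_of_not_ge hfg)
  rw [max_eq_right hfg]
  by_cases hg : g = 0
  · simpa [hg] using hfg
  rw [Kabs_of_ne_zero hg] at hfg ⊢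
  refine Kabs_le_zpow_neg_iff.mpr fun k hk => ?_
  rw [HahnSeries.coeff_add, Kabs_le_zpow_neg_iff.mp hfg k hk,
    HahnSeries.coeff_eq_zero_of_lt_order hk, add_zero]

variable (Fq) in
/-- `Kabs` as a bundled absolute value, through which `K̃` becomes a normed field. -/
def absKt : AbsoluteValue (Kt Fq) ℝ where
  toFun := Kabs Fq
  map_mul' := Kabs_mul
  nonneg' := Kabs_nonneg
  eq_zero' _ := Kabs_eq_zero
  add_le' f g := (isNonarchimedean_Kabs f g).trans
    (max_le_add_of_nonneg (Kabs_nonneg f) (Kabs_nonneg g))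

/-- The normed field structure of `K̃` with norm `Kabs`; `vnorm` is then the norm of the product
`Fin d → K̃`. -/
local instance normedFieldKt : NormedField (Kt Fq) :=
  (absKt Fq).toNormedField

local instance : IsUltrametricDist (Kt Fq) :=
  IsUltrametricDist.isUltrametricDist_of_isNonarchimedean_norm isNonarchimedean_Kabs

theorem norm_eq_Kabs (f : Kt Fq) : ‖f‖ = Kabs Fq f :=
  rfl

theorem vnorm_eq_norm {d : ℕ} (v : Fin d → Kt Fq) : vnorm Fq v = ‖v‖ := by
  refine le_antisymm (Real.iSup_le (norm_le_pi_norm v) (norm_nonneg v)) ?_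
  refine (pi_norm_le_iff_of_nonneg (Real.iSup_nonneg fun i => Kabs_nonneg (v i))).mpr fun i => ?_
  exact le_ciSup (f := fun i => Kabs Fq (v i)) (Set.finite_range _).bddAbove i

theorem norm_le_zpow_neg_iff {f : Kt Fq} {n : ℤ} : ‖f‖ ≤ q ^ (-n) ↔ ∀ k < n, f.coeff k = 0 :=
  Kabs_le_zpow_neg_iff

theorem zpow_neg_le_norm {f : Kt Fq} {n : ℤ} (h : f.coeff n ≠ 0) : q ^ (-n) ≤ ‖f‖ := by
  have hf : f ≠ 0 := by
    rintro rfl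
    exact h rfl
  rw [norm_eq_Kabs, Kabs_of_ne_zero hf]
  exact zpow_le_zpow_right₀ one_lt_card.le (neg_le_neg (HahnSeries.order_le_of_coeff_ne_zero h))

theorem norm_single (n : ℤ) {a : Fq} (ha : a ≠ 0) :
    ‖(HahnSeries.single n a : Kt Fq)‖ = q ^ (-n) := by
  rw [norm_eq_Kabs, Kabs_of_ne_zero (HahnSeries.single_ne_zero ha), HahnSeries.order_single ha]

theorem norm_C_le_one (a : Fq) : ‖(HahnSeries.C a : Kt Fq)‖ ≤ 1 := by
  by_cases ha : a = 0
  · simp [ha]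
  · exact (norm_single 0 ha).le.trans_eq (by simp)

theorem norm_sub_single_coeff_le {f : Kt Fq} {n : ℤ} (hf : ‖f‖ ≤ q ^ (-n)) :
    ‖f - HahnSeries.single n (f.coeff n)‖ ≤ q ^ (-(n + 1)) := by
  refine norm_le_zpow_neg_iff.mpr fun k hk => ?_
  rw [HahnSeries.coeff_sub, HahnSeries.coeff_single]
  split_ifs with hkn
  · rw [hkn, sub_self]
  · rw [sub_zero, norm_le_zpow_neg_iff.mp hf k (by omega)]

theorem exists_norm_sub_smul_C_lt {ι : Type*} [Fintype ι] {z : ι → Kt Fq} (hz : z ≠ 0) :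
    ∃ (a : Kt Fq) (c : ι → Fq), c ≠ 0 ∧ ‖a‖ = ‖z‖ ∧
      ‖z - a • fun i => (HahnSeries.C (c i) : Kt Fq)‖ < ‖z‖ := by
  obtain ⟨i, -⟩ := Function.ne_iff.mp hz
  have : Nonempty ι := ⟨i⟩
  obtain ⟨i₀, hmax⟩ := Finite.exists_max fun i => ‖z i‖
  have hnorm : ‖z‖ = ‖z i₀‖ :=
    ((pi_norm_le_iff_of_nonempty _).mpr hmax).antisymm (norm_le_pi_norm z i₀)
  have hz₀ : z i₀ ≠ 0 := norm_ne_zero_iff.mp (hnorm ▸ norm_ne_zero_iff.mpr hz)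
  set k := (z i₀).order
  have hk : ‖z‖ = q ^ (-k) := by rw [hnorm, norm_eq_Kabs, Kabs_of_ne_zero hz₀]
  refine ⟨HahnSeries.single k 1, fun i => (z i).coeff k, Function.ne_iff.mpr ⟨i₀, ?_⟩, ?_, ?_⟩
  · exact HahnSeries.coeff_order_eq_zero.not.mpr hz₀
  · rw [hk, norm_single k one_ne_zero]
  · refine lt_of_le_of_lt ((pi_norm_le_iff_of_nonempty _).mpr fun i => ?_)
      (hk ▸ zpow_lt_zpow_right₀ one_lt_card (by omega : -(k + 1) < -k))
    have hi : ‖z i‖ ≤ q ^ (-k) := hk ▸ norm_le_pi_norm z i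
    simpa [HahnSeries.C_apply, HahnSeries.single_mul_single] using norm_sub_single_coeff_le hi

theorem isSimilitude_of_le_norm_mulVec_C {m n : Type*} [Fintype m] [Fintype n]
    {V : Matrix m n (Kt Fq)} {r : ℝ} (hr : 0 < r) (hV : ∀ i j, ‖V i j‖ ≤ r)
    (hC : ∀ c : n → Fq, c ≠ 0 → r ≤ ‖V.mulVec fun j => HahnSeries.C (c j)‖) :
    IsSimilitude V r := by
  intro z
  by_cases hz : z = 0
  · simp [hz]
  obtain ⟨a, c, hc, ha, hlt⟩ := exists_norm_sub_smul_C_lt hz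
  set y : n → Kt Fq := fun j => HahnSeries.C (c j)
  have hy : ‖y‖ ≤ 1 := (pi_norm_le_iff_of_nonneg zero_le_one).mpr fun j => norm_C_le_one (c j)
  have hVy : ‖V.mulVec y‖ = r :=
    ((norm_mulVec_le_of_forall_norm_le hr.le hV y).trans (mul_le_of_le_one_right hr.le hy)).antisymm
      (hC c hc)
  have hlead : ‖V.mulVec (a • y)‖ = r * ‖z‖ := by
    rw [Matrix.mulVec_smul, norm_smul, hVy, ha, mul_comm]
  have hrest : ‖V.mulVec (z - a • y)‖ < r * ‖z‖ :=
    (norm_mulVec_le_of_forall_norm_le hr.le hV _).trans_lt (mul_lt_mul_of_pos_left hlt hr)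
  have hsplit : V.mulVec z = V.mulVec (a • y) + V.mulVec (z - a • y) := by
    rw [← Matrix.mulVec_add, add_sub_cancel]
  rw [hsplit, IsUltrametricDist.norm_add_eq_max_of_norm_ne_norm (hlead ▸ hrest.ne'),
    hlead, max_eq_left hrest.le]

theorem one_le_norm_polyK {p : Polynomial Fq} (hp : polyK Fq p ≠ 0) : 1 ≤ ‖polyK Fq p‖ := by
  have hcoeff : (polyK Fq p).coeff (polyK Fq p).order ≠ 0 :=
    HahnSeries.coeff_order_eq_zero.not.mpr hp
  rw [coeff_polyK] at hcoeff
  rw [norm_eq_Kabs, Kabs_of_ne_zero hp]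
  exact one_le_zpow₀ one_lt_card.le (by grind)

theorem exists_norm_sub_polyK_le (f : Kt Fq) : ∃ p : Polynomial Fq, ‖f - polyK Fq p‖ ≤ q⁻¹ := by
  refine ⟨∑ k ∈ Finset.range ((-f.order).toNat + 1),
    Polynomial.monomial k (f.coeff (-(k : ℤ))), ?_⟩
  rw [← zpow_neg_one, norm_le_zpow_neg_iff]
  intro n hn
  rw [HahnSeries.coeff_sub, coeff_polyK, if_neg (by omega), Polynomial.finsetSum_coeff]
  simp only [Polynomial.coeff_monomial, Finset.sum_ite_eq', Finset.mem_range]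
  split_ifs with h
  · rw [Int.toNat_of_nonneg (by omega), neg_neg, sub_self]
  · rw [sub_zero, HahnSeries.coeff_eq_zero_of_lt_order (by omega)]

theorem inv_card_le_norm_single_sub_polyK (p : Polynomial Fq) :
    q⁻¹ ≤ ‖HahnSeries.single 1 1 - polyK Fq p‖ := by
  rw [← zpow_neg_one]
  exact zpow_neg_le_norm (by simp [coeff_polyK])

section Lattice

variable {d : ℕ} {g V : Matrix (Fin d) (Fin d) (Kt Fq)} {r : ℝ}

theorem norm_det_le_of_lattice_subset (hVg : lattice Fq V ⊆ lattice Fq g) (hV : V.det ≠ 0) :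
    ‖g.det‖ ≤ ‖V.det‖ := by
  obtain ⟨P, rfl⟩ := exists_eq_mul_map_polyK fun j => hVg (col_mem_lattice V j)
  have hdet : (P.map (polyK Fq)).det = polyK Fq P.det := ((polyK Fq).map_det P).symm
  rw [Matrix.det_mul, hdet] at hV ⊢
  rw [norm_mul]
  exact le_mul_of_one_le_right (norm_nonneg _) (one_le_norm_polyK (right_ne_zero_of_mul hV))

theorem norm_det_eq_of_lattice_eq (h : lattice Fq V = lattice Fq g) (hV : V.det ≠ 0) :
    ‖V.det‖ = ‖g.det‖ :=
  (norm_det_le_of_lattice_subset h.ge (det_ne_zero_of_lattice_subset h.le hV)).antisymm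
    (norm_det_le_of_lattice_subset h.le hV)

theorem IsSimilitude.exists_mem_lattice_norm_sub_le (hV : IsSimilitude V r) (hr : 0 < r)
    (w : Fin d → Kt Fq) : ∃ u ∈ lattice Fq V, ‖w - u‖ ≤ r * q⁻¹ := by
  obtain ⟨y, rfl⟩ : ∃ y, V.mulVec y = w := ⟨_, hV.mulVec_inv_mulVec hr w⟩
  choose c hc using fun j => exists_norm_sub_polyK_le (y j)
  refine ⟨_, mulVec_polyK_mem_lattice V c, ?_⟩
  rw [← Matrix.mulVec_sub, hV]
  gcongr
  exact (pi_norm_le_iff_of_nonneg (by positivity)).mpr hc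

theorem IsSimilitude.exists_forall_mem_lattice_le_norm_sub [NeZero d] (hV : IsSimilitude V r)
    (hr : 0 < r) : ∃ w, ∀ u ∈ lattice Fq V, r * q⁻¹ ≤ ‖w - u‖ := by
  refine ⟨V.mulVec fun _ => HahnSeries.single 1 1, ?_⟩
  rintro _ ⟨c, rfl⟩
  rw [← Matrix.mulVec_sub, hV]
  gcongr
  exact (inv_card_le_norm_single_sub_polyK (c 0)).trans
    (norm_le_pi_norm (fun j => HahnSeries.single 1 1 - polyK Fq (c j)) 0)

theorem IsSimilitude.covRad_lattice [NeZero d] (hV : IsSimilitude V r) (hr : 0 < r) :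
    covRad Fq (vnorm Fq) (lattice Fq V) = r * q⁻¹ := by
  rw [funext vnorm_eq_norm]
  exact covRad_eq_of_forall_exists_le_of_exists_forall_le norm_nonneg
    (hV.exists_mem_lattice_norm_sub_le hr) (hV.exists_forall_mem_lattice_le_norm_sub hr)

theorem ell_le_norm {Λ : Set (Fin d → Kt Fq)} {u : Fin d → Kt Fq} (hu : u ∈ Λ) (hu₀ : u ≠ 0) :
    ell Fq Λ ≤ ‖u‖ := by
  refine csInf_le ⟨0, ?_⟩ ⟨u, hu, hu₀, vnorm_eq_norm u⟩
  rintro _ ⟨v, -, -, rfl⟩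
  exact vnorm_eq_norm v ▸ norm_nonneg v

theorem IsSimilitude.lattice_eq (hV : IsSimilitude V (ell Fq (lattice Fq g)))
    (hell : 0 < ell Fq (lattice Fq g)) (hVg : ∀ j, V.col j ∈ lattice Fq g) :
    lattice Fq V = lattice Fq g := by
  refine (lattice_subset_of_col_mem hVg).antisymm fun u hu => ?_
  obtain ⟨v, hv, huv⟩ := hV.exists_mem_lattice_norm_sub_le hell u
  have hlt : ‖u - v‖ < ell Fq (lattice Fq g) :=
    huv.trans_lt (mul_lt_of_lt_one_right hell (inv_lt_one_of_one_lt₀ one_lt_card))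
  have hsub : u - v = 0 := by
    by_contra h
    exact hlt.not_ge (ell_le_norm (sub_mem_lattice hu (lattice_subset_of_col_mem hVg hv)) h)
  rwa [sub_eq_zero.mp hsub]

theorem IsWellRounded.ell_pos [NeZero d] {Λ : Set (Fin d → Kt Fq)} (hΛ : IsWellRounded Fq Λ) :
    0 < ell Fq Λ := by
  obtain ⟨v, -, hindep, hnorm⟩ := hΛ
  rw [← hnorm 0, vnorm_eq_norm]
  exact norm_pos_iff.mpr (hindep.ne_zero 0)

theorem isSimilitude_ell (hell : 0 < ell Fq (lattice Fq g)) (hVg : ∀ j, V.col j ∈ lattice Fq g)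
    (hindep : LinearIndependent (Kt Fq) V.col)
    (hnorm : ∀ j, vnorm Fq (V.col j) = ell Fq (lattice Fq g)) :
    IsSimilitude V (ell Fq (lattice Fq g)) := by
  refine isSimilitude_of_le_norm_mulVec_C hell (fun i j => ?_) fun c hc => ?_
  · rw [← hnorm j, vnorm_eq_norm]
    exact norm_le_pi_norm (V.col j) i
  · have hmem : (V.mulVec fun j => HahnSeries.C (c j)) ∈ lattice Fq g := by
      simp only [← polyK_C]
      exact lattice_subset_of_col_mem hVg (mulVec_polyK_mem_lattice V _)
    refine ell_le_norm hmem fun h => hc (funext fun j => ?_)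
    have hC : (fun j => (HahnSeries.C (c j) : Kt Fq)) = 0 :=
      Matrix.mulVec_injective_iff.mpr hindep (h.trans (Matrix.mulVec_zero V).symm)
    exact HahnSeries.C_injective ((congrFun hC j).trans (map_zero _).symm)

theorem IsWellRounded.exists_isSimilitude [NeZero d] (hg : IsWellRounded Fq (lattice Fq g)) :
    ∃ V : Matrix (Fin d) (Fin d) (Kt Fq),
      IsSimilitude V (ell Fq (lattice Fq g)) ∧ lattice Fq V = lattice Fq g := by
  have hell := hg.ell_pos
  obtain ⟨v, hmem, hindep, hnorm⟩ := hg
  have hV := isSimilitude_ell (V := Matrix.of fun i j => v j i) hell hmem hindep hnorm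
  exact ⟨_, hV, hV.lattice_eq hell hmem⟩

theorem IsWellRounded.Kabs_det [NeZero d] (hg : IsWellRounded Fq (lattice Fq g)) :
    Kabs Fq g.det = ell Fq (lattice Fq g) ^ d := by
  obtain ⟨V, hV, hVg⟩ := hg.exists_isSimilitude
  rw [← norm_eq_Kabs, ← norm_det_eq_of_lattice_eq hVg (hV.det_ne_zero hg.ell_pos),
    hV.norm_det hg.ell_pos, Fintype.card_fin]

theorem IsWellRounded.covRad_lattice [NeZero d] (hg : IsWellRounded Fq (lattice Fq g)) :
    covRad Fq (vnorm Fq) (lattice Fq g) = ell Fq (lattice Fq g) * q⁻¹ := by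
  obtain ⟨V, hV, hVg⟩ := hg.exists_isSimilitude
  nth_rw 1 [← hVg]
  exact hV.covRad_lattice hg.ell_pos

end Lattice

end LaurentSeries

theorem covRad_of_wellRounded_general {d : ℕ} [NeZero d] {g : Matrix (Fin d) (Fin d) (Kt Fq)}
    (hwr : IsWellRounded Fq (lattice Fq g)) :
    covRad Fq (vnorm Fq) (lattice Fq g) =
      Kabs Fq g.det ^ (d : ℝ)⁻¹ * (Fintype.card Fq : ℝ)⁻¹ := by
  rw [hwr.covRad_lattice, hwr.Kabs_det, Real.pow_rpow_inv_natCast hwr.ell_pos.le (NeZero.ne d)]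

/-- function field analogue of Woods' conjecture.
Every well rounded unimodular lattice has covering radius `q⁻¹` with respect to the sup norm. -/
theorem covRad_of_wellRounded {d : ℕ} (hd : 2 ≤ d)
    (g : Matrix (Fin d) (Fin d) (Kt Fq)) (hg : Kabs Fq g.det = 1)
    (hwr : IsWellRounded Fq (lattice Fq g)) :
    covRad Fq (vnorm Fq) (lattice Fq g) = (Fintype.card Fq : ℝ)⁻¹ := by
  have : NeZero d := ⟨by omega⟩
  rw [covRad_of_wellRounded_general Fq hwr, hg, Real.one_rpow, one_mul]
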